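/- Let K be a field and k ≥ 1 a natural number. Let I_k be the ideal of K[x_0, x_1, x_2, x_3] generated by the three binomials x_0^k x_2 x_3 − x_1^{k+2}, x_0 x_1^k x_3 − x_2^{k+2}, and x_0 x_1 x_2^k − x_3^{k+2}. Then I_k is not a lattice ideal: for every additive subgroup L of ℤ^4 (functions Fin 4 → ℤ), I_k is not equal to the ideal generated by all binomials x^u − x^v with u, v ∈ ℕ^4 and u − v ∈ L. -/

import Mathlib

open MvPolynomial

/-- The ideal `I_k` of `K[x_0,x_1,x_2,x_3]` generated by the deformed binomials
`x_0^k x_2 x_3 − x_1^{k+2}`, `x_0 x_1^k x_3 − x_2^{k+2}`, `x_0 x_1 x_2^k − x_3^{k+2}`. -/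
noncomputable def Ik (K : Type*) [Field K] (k : ℕ) : Ideal (MvPolynomial (Fin 4) K) :=
  Ideal.span {X 0 ^ k * X 2 * X 3 - X 1 ^ (k+2),
              X 0 * X 1 ^ k * X 3 - X 2 ^ (k+2),
              X 0 * X 1 * X 2 ^ k - X 3 ^ (k+2)}

/-- The lattice ideal of a set `L ⊆ ℤ^4`: the ideal of `K[x_0,…,x_3]` generated by
all binomials `x^u - x^v` with `u, v ∈ ℕ^4` and `u - v ∈ L`. -/
noncomputable def latticeIdeal (K : Type*) [Field K]
    (L : Set (Fin 4 → ℤ)) : Ideal (MvPolynomial (Fin 4) K) :=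
  Ideal.span {p | ∃ u v : Fin 4 → ℕ,
    (fun i => (u i : ℤ) - (v i : ℤ)) ∈ L ∧
    p = (∏ i, X i ^ u i) - (∏ i, X i ^ v i)}

noncomputable def gradHom (K : Type*) [Field K] (L : AddSubgroup (Fin 4 → ℤ)) :
    MvPolynomial (Fin 4) K →ₐ[K] AddMonoidAlgebra K ((Fin 4 → ℤ) ⧸ L) :=
  aeval (fun i => AddMonoidAlgebra.single
    (QuotientAddGroup.mk (Pi.single i (1 : ℤ)) : (Fin 4 → ℤ) ⧸ L) (1 : K))

lemma gradHom_mon (K : Type*) [Field K] (L : AddSubgroup (Fin 4 → ℤ)) (u : Fin 4 → ℕ) :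
    gradHom K L (∏ i, X i ^ u i) = AddMonoidAlgebra.single
      (QuotientAddGroup.mk (fun i => (u i : ℤ)) : (Fin 4 → ℤ) ⧸ L) (1 : K) := by
  have h : (fun i => (u i : ℤ)) = u 0 • Pi.single (0 : Fin 4) (1 : ℤ) + u 1 • Pi.single 1 1
      + u 2 • Pi.single 2 1 + u 3 • Pi.single 3 1 := by
    funext i
    fin_cases i <;> simp
  rw [h]
  simp [gradHom, Fin.prod_univ_four, AddMonoidAlgebra.single_pow, AddMonoidAlgebra.single_mul_single]

lemma mem_of_binomial (K : Type*) [Field K] (L : AddSubgroup (Fin 4 → ℤ)) (u v : Fin 4 → ℕ)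
    (h : (∏ i, X i ^ u i) - (∏ i, X i ^ v i) ∈ latticeIdeal K (L : Set (Fin 4 → ℤ))) :
    (fun i => (u i : ℤ) - (v i : ℤ)) ∈ L := by
  have key : ∀ a b : Fin 4 → ℕ, (QuotientAddGroup.mk (fun i => (a i : ℤ)) : (Fin 4 → ℤ) ⧸ L)
      = QuotientAddGroup.mk (fun i => (b i : ℤ)) ↔ (fun i => (a i : ℤ) - (b i : ℤ)) ∈ L := by
    intro a b
    rw [eq_comm, QuotientAddGroup.eq]
    have : (-(fun i => (b i : ℤ)) + fun i => (a i : ℤ)) = fun i => (a i : ℤ) - (b i : ℤ) := by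
      funext i
      simp
      ring
    rw [this]
  have hle : latticeIdeal K (L : Set (Fin 4 → ℤ)) ≤ RingHom.ker (gradHom K L) := by
    refine Ideal.span_le.2 ?_
    rintro p ⟨a, b, hab, rfl⟩
    change gradHom K L _ = 0
    rw [map_sub, gradHom_mon, gradHom_mon, (key a b).2 hab, sub_self]
  have h2 : gradHom K L _ = 0 := hle h
  rw [map_sub, gradHom_mon, gradHom_mon, sub_eq_zero] at h2
  exact (key u v).1 (AddMonoidAlgebra.single_left_injective (one_ne_zero) h2)

theorem stmt10 (K : Type*) [Field K] (k : ℕ) (hk : 1 ≤ k) :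
    ∀ L : AddSubgroup (Fin 4 → ℤ), Ik K k ≠ latticeIdeal K (L : Set (Fin 4 → ℤ)) := by
  intro L hL
  have ha := mem_of_binomial K L ![k, 0, 1, 1] ![0, k+2, 0, 0] (by
    rw [← hL]; refine Ideal.subset_span (Or.inl ?_); simp [Fin.prod_univ_four])
  have hb := mem_of_binomial K L ![1, k, 0, 1] ![0, 0, k+2, 0] (by
    rw [← hL]; refine Ideal.subset_span (Or.inr (Or.inl ?_)); simp [Fin.prod_univ_four])
  have hc := mem_of_binomial K L ![1, 1, k, 0] ![0, 0, 0, k+2] (by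
    rw [← hL]; refine Ideal.subset_span (Or.inr (Or.inr ?_)); simp [Fin.prod_univ_four])
  have hs := L.add_mem (L.add_mem ha hb) hc
  have hm : (∏ i, X i ^ (![k+2, 0, 0, 0] : Fin 4 → ℕ) i)
      - (∏ i, X i ^ (![0, 1, 1, k] : Fin 4 → ℕ) i) ∈ Ik K k := by
    rw [hL]
    refine Ideal.subset_span ⟨_, _, ?_, rfl⟩
    rw [SetLike.mem_coe]
    convert hs using 1
    funext i
    fin_cases i <;> simp <;> ring
  have hle : Ik K k ≤ RingHom.ker (aeval (![1, 0, 0, 0] : Fin 4 → K)) := by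
    refine Ideal.span_le.2 ?_
    rintro p (rfl | rfl | rfl) <;> simp [RingHom.mem_ker]
  have h0 : aeval (![1, 0, 0, 0] : Fin 4 → K) _ = 0 := hle hm
  simp [Fin.prod_univ_four] at h0
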